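/- arXiv:2604.25341 — 3 statements merged into one kernel-verified Lean document; each statement's English description precedes it below -/
import Mathlib

section
/- For every tree T of order n ≥ 3, σ_t(T) ≤ (n − 2) · σ(T). -/
open Finset
open scoped Classical

noncomputable section

variable {V : Type*}

/-- Albertson irregularity: `∑_{uv ∈ E} |d(u) - d(v)|` (as an integer). -/
def irr [Fintype V] (G : SimpleGraph V) : ℤ :=
  ∑ e ∈ G.edgeFinset,
    Sym2.lift ⟨fun u v => |(G.degree u : ℤ) - (G.degree v : ℤ)|,
      fun u v => by simp only []; rw [abs_sub_comm]⟩ e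

/-- `σ(G) = ∑_{uv ∈ E} (d(u) - d(v))²`. -/
def sigmaE [Fintype V] (G : SimpleGraph V) : ℤ :=
  ∑ e ∈ G.edgeFinset,
    Sym2.lift ⟨fun u v => ((G.degree u : ℤ) - (G.degree v : ℤ)) ^ 2,
      fun u v => by simp only []; ring⟩ e

/-- `σ_t(G) = ∑_{{u,v} ⊆ V, u ≠ v} (d(u) - d(v))²`, over unordered pairs of distinct vertices. -/
def sigmaT [Fintype V] (G : SimpleGraph V) : ℤ :=
  ∑ p ∈ (Finset.univ : Finset V).sym2.filter (fun p => ¬ p.IsDiag),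
    Sym2.lift ⟨fun u v => ((G.degree u : ℤ) - (G.degree v : ℤ)) ^ 2,
      fun u v => by simp only []; ring⟩ p

/-- Degree variance `Var(G) = (1/n) ∑_v (d(v) - 2m/n)²`. -/
def degVar [Fintype V] (G : SimpleGraph V) : ℝ :=
  (∑ v : V, ((G.degree v : ℝ) - 2 * (G.edgeFinset.card : ℝ) / (Fintype.card V : ℝ)) ^ 2) /
    (Fintype.card V : ℝ)

end



theorem aux_sym2 {V : Type*} [Fintype V] (s : Finset (Sym2 V)) (hs : ∀ e ∈ s, ¬ e.IsDiag)
    (f : Sym2 V → ℤ) :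
    ∑ u : V, ∑ v : V, (if s(u, v) ∈ s then f s(u, v) else 0) = 2 * ∑ e ∈ s, f e := by
  rw [← Fintype.sum_prod_type' (f := fun u v => if s(u, v) ∈ s then f s(u, v) else 0),
    ← Finset.sum_filter]
  have h1 := Finset.sum_fiberwise_of_maps_to' (s := univ.filter (fun p : V × V => s(p.1, p.2) ∈ s))
    (t := s) (g := fun p : V × V => s(p.1, p.2)) (fun p hp => (Finset.mem_filter.1 hp).2) f
  rw [← h1, Finset.mul_sum]
  refine Finset.sum_congr rfl fun e he => ?_
  rw [Finset.sum_const, nsmul_eq_mul]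
  congr 1
  have hd := hs e he
  induction e using Sym2.ind with
  | _ a b =>
    have hab : a ≠ b := by simpa using hd
    have : (filter (fun p : V × V => s(p.1, p.2) = s(a, b))
        (univ.filter (fun p : V × V => s(p.1, p.2) ∈ s))) = {(a, b), (b, a)} := by
      ext ⟨x, y⟩
      simp only [mem_filter, mem_univ, true_and, mem_insert, mem_singleton, Prod.mk.injEq,
        Sym2.eq_iff]
      constructor
      · rintro ⟨_, h⟩; exact h
      · rintro (⟨rfl, rfl⟩ | ⟨rfl, rfl⟩)
        · exact ⟨he, Or.inl ⟨rfl, rfl⟩⟩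
        · exact ⟨by rwa [Sym2.eq_swap], Or.inr ⟨rfl, rfl⟩⟩
    rw [this, Finset.card_pair (by simp [hab])]
    rfl

theorem aux_forest {W : Type*} [Fintype W] [Nonempty W] (H : SimpleGraph W) (h : H.IsAcyclic) :
    ∑ w, (H.degree w : ℤ) ≤ 2 * (Fintype.card W : ℤ) - 2 := by
  obtain ⟨T, hT, -, hTree⟩ :=
    (SimpleGraph.connected_top (V := W)).exists_isTree_le_of_le_of_isAcyclic le_top h
  have h1 := hTree.card_edgeFinset
  have h2 := H.sum_degrees_eq_twice_card_edges
  have h3 : H.edgeFinset.card ≤ T.edgeFinset.card :=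
    Finset.card_le_card (SimpleGraph.edgeFinset_mono (by assumption))
  have h4 : ∑ w, (H.degree w : ℤ) = 2 * (H.edgeFinset.card : ℤ) := by exact_mod_cast h2
  omega

theorem aux_deg {V : Type*} [Fintype V] (G : SimpleGraph V) (u : V) :
    (G.degree u : ℤ) = ∑ v, if G.Adj u v then 1 else 0 := by
  rw [← SimpleGraph.card_neighborFinset_eq_degree, SimpleGraph.neighborFinset_eq_filter,
    Finset.sum_boole]

/-- edge cut -/
theorem aux_cut {V : Type*} [Fintype V] (G : SimpleGraph V) (hT : G.IsAcyclic) (A : Finset V)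
    (hA : A.Nonempty) :
    ∑ u ∈ A, ((G.degree u : ℤ) - 2) + 2 ≤
      ∑ u ∈ A, ∑ v ∈ Aᶜ, if G.Adj u v then (1 : ℤ) else 0 := by
  have h1 : ∑ u ∈ A, ∑ v ∈ A, (if G.Adj u v then (1 : ℤ) else 0) ≤ 2 * (A.card : ℤ) - 2 := by
    have : Nonempty {x // x ∈ A} := hA.to_subtype
    have := aux_forest (G.comap (fun a : {x // x ∈ A} => (a : V)))
      (hT.comap ⟨fun a => (a : V), fun h => h⟩ Subtype.val_injective)
    simp only [aux_deg, SimpleGraph.comap_adj, Fintype.card_coe] at this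
    rw [← Finset.sum_coe_sort A]
    refine le_trans (le_of_eq (Finset.sum_congr rfl fun u _ => ?_)) this
    rw [← Finset.sum_coe_sort A]
  have h2 : ∑ u ∈ A, (G.degree u : ℤ) =
      ∑ u ∈ A, ∑ v ∈ A, (if G.Adj u v then (1 : ℤ) else 0) +
      ∑ u ∈ A, ∑ v ∈ Aᶜ, (if G.Adj u v then (1 : ℤ) else 0) := by
    rw [← Finset.sum_add_distrib]
    refine Finset.sum_congr rfl fun u _ => ?_
    rw [aux_deg, Finset.sum_add_sum_compl]
  rw [Finset.sum_sub_distrib, Finset.sum_const, nsmul_eq_mul]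
  linarith

theorem aux_level (a b D : ℕ) (ha : 1 ≤ a) (hb : 1 ≤ b) (haD : a ≤ D) (hbD : b ≤ D) :
    ∑ t ∈ Icc 2 D, (if t ≤ a ∧ ¬ t ≤ b then (1 : ℤ) else 0) +
    ∑ t ∈ Icc 2 D, (if t ≤ b ∧ ¬ t ≤ a then (1 : ℤ) else 0) ≤ ((a : ℤ) - b) ^ 2 := by
  have key : ∀ x y : ℕ, 1 ≤ y → x ≤ D →
      ∑ t ∈ Icc 2 D, (if t ≤ x ∧ ¬ t ≤ y then (1 : ℤ) else 0) = ((x - y : ℕ) : ℤ) := by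
    intro x y hy hx
    rw [Finset.sum_boole]
    have : filter (fun t => t ≤ x ∧ ¬ t ≤ y) (Icc 2 D) = Icc (y + 1) x := by
      ext t; simp only [mem_filter, mem_Icc]; omega
    rw [this, Nat.card_Icc]
    congr 1
    omega
  rw [key a b hb haD, key b a ha hbD]
  rcases le_total a b with h | h
  · obtain ⟨c, rfl⟩ := Nat.exists_eq_add_of_le h
    have : (c : ℤ) ≤ (c : ℤ) ^ 2 := by exact_mod_cast Nat.le_self_pow (by norm_num) c
    have e1 : a - (a + c) = 0 := by omega
    have e2 : a + c - a = c := by omega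
    rw [e1, e2]; push_cast; nlinarith
  · obtain ⟨c, rfl⟩ := Nat.exists_eq_add_of_le h
    have : (c : ℤ) ≤ (c : ℤ) ^ 2 := by exact_mod_cast Nat.le_self_pow (by norm_num) c
    have e1 : b - (b + c) = 0 := by omega
    have e2 : b + c - b = c := by omega
    rw [e1, e2]; push_cast; nlinarith

theorem aux_main {V : Type*} [Fintype V] (G : SimpleGraph V) (hT : G.IsAcyclic) (D : ℕ)
    (hD : 1 ≤ D) (h1 : ∀ v, 1 ≤ G.degree v) (hle : ∀ v, G.degree v ≤ D) (m : V)
    (hm : G.degree m = D) :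
    2 * (∑ v, ((G.degree v : ℤ) - 1) * ((G.degree v : ℤ) - 2) + 2 * (D - 1)) ≤
    ∑ u, ∑ v, if G.Adj u v then ((G.degree u : ℤ) - G.degree v) ^ 2 else 0 := by
  set c : V → V → ℤ := fun u v => if G.Adj u v then
    ∑ t ∈ Icc 2 D, (if t ≤ G.degree u ∧ ¬ t ≤ G.degree v then (1 : ℤ) else 0) else 0 with hc
  have hcut : ∑ v, ((G.degree v : ℤ) - 1) * ((G.degree v : ℤ) - 2) + 2 * (D - 1) ≤
      ∑ u, ∑ v, c u v := by
    have e1 : ∑ u, ∑ v, c u v = ∑ t ∈ Icc 2 D, ∑ u ∈ univ.filter (fun u => t ≤ G.degree u),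
        ∑ v ∈ (univ.filter (fun u => t ≤ G.degree u))ᶜ, if G.Adj u v then (1 : ℤ) else 0 := by
      have : ∀ u v, c u v = ∑ t ∈ Icc 2 D, if t ≤ G.degree u then
          (if ¬ t ≤ G.degree v then (if G.Adj u v then (1 : ℤ) else 0) else 0) else 0 := by
        intro u v
        by_cases h : G.Adj u v
        · simp only [hc, h, if_true, ite_and]
        · simp [hc, h]
      simp only [this, Finset.compl_filter, Finset.sum_filter]
      have e : ∀ u : V, (∑ v, ∑ t ∈ Icc 2 D, if t ≤ G.degree u then
          (if ¬ t ≤ G.degree v then (if G.Adj u v then (1 : ℤ) else 0) else 0) else 0) =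
          ∑ t ∈ Icc 2 D, if t ≤ G.degree u then ∑ v,
          (if ¬ t ≤ G.degree v then (if G.Adj u v then (1 : ℤ) else 0) else 0) else 0 := by
        intro u
        rw [Finset.sum_comm]
        refine Finset.sum_congr rfl fun t _ => ?_
        split_ifs <;> simp
      simp only [e]
      rw [Finset.sum_comm]
    have e2 : ∑ v, ((G.degree v : ℤ) - 1) * ((G.degree v : ℤ) - 2) + 2 * (D - 1) =
        ∑ t ∈ Icc 2 D, (∑ u ∈ univ.filter (fun u => t ≤ G.degree u),
          ((G.degree u : ℤ) - 2) + 2) := by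
      rw [Finset.sum_add_distrib, Finset.sum_const, Nat.card_Icc, nsmul_eq_mul]
      simp only [Finset.sum_filter]
      rw [Finset.sum_comm]
      congr 1
      · refine Finset.sum_congr rfl fun v _ => ?_
        rw [← Finset.sum_filter, Finset.sum_const, nsmul_eq_mul]
        have : filter (fun t => t ≤ G.degree v) (Icc 2 D) = Icc 2 (G.degree v) := by
          ext t; simp only [mem_filter, mem_Icc]; have := hle v; omega
        rw [this, Nat.card_Icc]
        have := h1 v
        congr 1
        omega
      · have : ((D + 1 - 2 : ℕ) : ℤ) = D - 1 := by omega
        rw [this]; ring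
    rw [e1, e2]
    refine Finset.sum_le_sum fun t ht => aux_cut G hT _ ⟨m, ?_⟩
    simp only [mem_filter, mem_univ, true_and, hm]
    exact (mem_Icc.1 ht).2
  have hsum : ∑ u, ∑ v, (c u v + c v u) ≤
      ∑ u, ∑ v, if G.Adj u v then ((G.degree u : ℤ) - G.degree v) ^ 2 else 0 := by
    refine Finset.sum_le_sum fun u _ => Finset.sum_le_sum fun v _ => ?_
    by_cases h : G.Adj u v
    · simp only [hc, h, h.symm, if_true]
      exact aux_level _ _ D (h1 u) (h1 v) (hle u) (hle v)
    · have h' : ¬ G.Adj v u := fun h' => h h'.symm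
      simp [hc, h, h']
  have hsw : ∑ u, ∑ v, (c u v + c v u) = 2 * ∑ u, ∑ v, c u v := by
    simp only [Finset.sum_add_distrib]
    rw [Finset.sum_comm (f := fun u v => c v u)]
    ring
  linarith

/-- For every tree `T` of order `n ≥ 3`, `σ_t(T) ≤ (n-2) · σ(T)`. -/
theorem stmt1 {V : Type*} [Fintype V] (G : SimpleGraph V) (hT : G.IsTree)
    (hn : 3 ≤ Fintype.card V) :
    sigmaT G ≤ ((Fintype.card V : ℤ) - 2) * sigmaE G := by
  have : Nontrivial V := Fintype.one_lt_card_iff_nontrivial.1 (by omega)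
  have h1 : ∀ v, 1 ≤ G.degree v := fun v => hT.connected.preconnected.degree_pos_of_nontrivial v
  obtain ⟨m, -, hm⟩ := Finset.exists_max_image (univ : Finset V) (fun v => G.degree v) ⟨Classical.arbitrary V, mem_univ _⟩
  have hle : ∀ v, G.degree v ≤ G.degree m := fun v => hm v (mem_univ v)
  have hmain := aux_main G hT.isAcyclic (G.degree m) (h1 m) h1 hle m rfl
  have hE : ∑ u, ∑ v, (if G.Adj u v then ((G.degree u : ℤ) - G.degree v) ^ 2 else 0) =
      2 * sigmaE G := by
    rw [sigmaE, ← aux_sym2 _ (fun e he => G.not_isDiag_of_mem_edgeFinset he)]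
    simp
  have hTt : ∑ u, ∑ v, ((G.degree u : ℤ) - G.degree v) ^ 2 = 2 * sigmaT G := by
    rw [sigmaT, ← aux_sym2 _ (fun e he => (mem_filter.1 he).2)]
    refine Finset.sum_congr rfl fun u _ => Finset.sum_congr rfl fun v _ => ?_
    by_cases h : u = v
    · subst h; simp
    · simp [h]
  have hsum : ∑ v, (G.degree v : ℤ) = 2 * (Fintype.card V : ℤ) - 2 := by
    have a := hT.card_edgeFinset
    have b := G.sum_degrees_eq_twice_card_edges
    have c : ∑ v, (G.degree v : ℤ) = 2 * (G.edgeFinset.card : ℤ) := by exact_mod_cast b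
    omega
  set n : ℤ := (Fintype.card V : ℤ) with hnn
  set S : ℤ := ∑ v, (G.degree v : ℤ) ^ 2 with hS
  have hT2 : ∑ u, ∑ v, ((G.degree u : ℤ) - G.degree v) ^ 2 = 2 * n * S - 2 * (2 * n - 2) ^ 2 := by
    have : ∀ u, ∑ v, ((G.degree u : ℤ) - G.degree v) ^ 2 =
        n * (G.degree u : ℤ) ^ 2 - 2 * (2 * n - 2) * G.degree u + S := by
      intro u
      simp only [sub_sq, Finset.sum_add_distrib, Finset.sum_sub_distrib, ← Finset.mul_sum, hsum,
        Finset.sum_const, nsmul_eq_mul, Finset.card_univ, ← hS, ← hnn]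
      ring
    simp only [this, Finset.sum_add_distrib, Finset.sum_sub_distrib, ← Finset.mul_sum, hsum,
        Finset.sum_const, nsmul_eq_mul, Finset.card_univ, ← hS, ← hnn]
    ring
  have hQ : ∑ v, ((G.degree v : ℤ) - 1) * ((G.degree v : ℤ) - 2) = S - 3 * (2 * n - 2) + 2 * n := by
    have : ∀ v, ((G.degree v : ℤ) - 1) * ((G.degree v : ℤ) - 2) =
      (G.degree v : ℤ) ^ 2 - 3 * G.degree v + 2 := fun v => by ring
    simp only [this, Finset.sum_add_distrib, Finset.sum_sub_distrib, ← Finset.mul_sum, hsum,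
        Finset.sum_const, nsmul_eq_mul, Finset.card_univ, ← hS, ← hnn]
    ring
  have hQle : ∑ v, ((G.degree v : ℤ) - 1) * ((G.degree v : ℤ) - 2) ≤
      (n - 2) * ((G.degree m : ℤ) - 2) := by
    have : n - 2 = ∑ v, ((G.degree v : ℤ) - 1) := by
      rw [Finset.sum_sub_distrib, hsum, Finset.sum_const, nsmul_eq_mul, Finset.card_univ, ← hnn]
      ring
    rw [this, Finset.sum_mul]
    refine Finset.sum_le_sum fun v _ => ?_
    have a := h1 v
    have b := hle v
    refine mul_le_mul_of_nonneg_left ?_ ?_ <;> omega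
  have hn2 : 0 ≤ n - 2 := by omega
  have hsig : ∑ v, ((G.degree v : ℤ) - 1) * ((G.degree v : ℤ) - 2) + 2 * ((G.degree m : ℤ) - 1)
    ≤ sigmaE G := by linarith
  have := mul_le_mul_of_nonneg_left hsig hn2
  rw [hQ] at this hQle
  nlinarith
end

section
/- For every tree T of order n with maximum degree Δ(T) ≥ 3, the strict inequality σ_t(T) < (n − 2) · σ(T) holds. -/
open Finset
open scoped Classical

lemma aux_pairs {V : Type*} [Fintype V] (s : Finset (Sym2 V)) (hs : ∀ p ∈ s, ¬ p.IsDiag)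
    (f : Sym2 V → ℤ) :
    ∑ u : V, ∑ v : V, (if s(u, v) ∈ s then f s(u, v) else 0) = 2 * ∑ p ∈ s, f p := by
  have h1 : ∀ u v : V, (if s(u, v) ∈ s then f s(u, v) else 0)
      = ∑ p ∈ s, if s(u, v) = p then f p else 0 := by
    intro u v
    rw [Finset.sum_ite_eq]
  simp_rw [h1]
  rw [← Fintype.sum_prod_type' (f := fun u v => ∑ p ∈ s, if s(u, v) = p then f p else 0)]
  rw [Finset.sum_comm, Finset.mul_sum]
  refine Finset.sum_congr rfl fun p hp => ?_
  have hd := hs p hp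
  induction p using Sym2.ind with
  | _ a b =>
    have hab : a ≠ b := by simpa using hd
    rw [← Finset.sum_filter]
    have : (Finset.univ.filter fun x : V × V => s(x.1, x.2) = s(a, b)) = {(a, b), (b, a)} := by
      ext ⟨u, v⟩
      simp
    rw [this, Finset.sum_pair (by simp [hab]), two_mul]

lemma aux_min {V : Type*} [Fintype V] (G : SimpleGraph V) (hT : G.IsTree) (r : V)
    (x : V → ℤ) (F : Sym2 V → ℤ) (hF : ∀ p, ∀ v ∈ p, F p ≤ x v) :
    ∑ e ∈ G.edgeFinset, F e ≤ ∑ v, x v - x r := by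
  have hc := hT.connected
  have hpar : ∀ v : V, v ≠ r → ∃ w, G.Adj v w ∧ G.dist w r < G.dist v r := by
    intro v hv
    obtain ⟨p, hp⟩ := hc.exists_walk_length_eq_dist v r
    cases p with
    | nil => exact absurd rfl hv
    | cons h q =>
      rename_i w
      refine ⟨w, h, ?_⟩
      have := SimpleGraph.dist_le q
      simp at hp
      omega
  choose! par hadj hdist using hpar
  have hinj : Set.InjOn (fun v => s(v, par v)) ((Finset.univ.erase r : Finset V) : Set V) := by
    intro v hv w hw h
    simp at hv hw
    by_contra hne
    simp only [Sym2.eq_iff] at h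
    rcases h with h | h
    · exact hne h.1
    · have h1 := hdist v hv
      have h2 := hdist w hw
      rw [h.2] at h1
      rw [← h.1] at h2
      omega
  have himg : (Finset.univ.erase r).image (fun v => s(v, par v)) = G.edgeFinset := by
    apply Finset.eq_of_subset_of_card_le
    · intro e he
      simp only [Finset.mem_image, Finset.mem_erase] at he
      obtain ⟨v, hv, rfl⟩ := he
      simpa using hadj v hv.1
    · rw [Finset.card_image_of_injOn hinj, Finset.card_erase_of_mem (Finset.mem_univ _)]
      have := hT.card_edgeFinset
      simp only [Finset.card_univ]
      omega
  rw [← himg, Finset.sum_image hinj]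
  rw [← Finset.sum_erase_eq_sub (Finset.mem_univ r)]
  exact Finset.sum_le_sum fun v _ => hF _ _ (by simp)

set_option maxHeartbeats 1000000 in
/-- For every tree `T` of order `n` with `Δ(T) ≥ 3`, `σ_t(T) < (n-2) · σ(T)`. -/
theorem stmt2 {V : Type*} [Fintype V] (G : SimpleGraph V) (hT : G.IsTree)
    (hΔ : 3 ≤ G.maxDegree) :
    sigmaT G < ((Fintype.card V : ℤ) - 2) * sigmaE G := by
  have hc := hT.connected
  have := hc.nonempty
  obtain ⟨r, hr⟩ := G.exists_maximal_degree_vertex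
  set n : ℤ := (Fintype.card V : ℤ) with hn
  set d : V → ℤ := fun v => (G.degree v : ℤ) with hd
  set S : ℤ := ∑ v, d v ^ 2 with hS
  have hcard := hT.card_edgeFinset
  have hsum : ∑ v, d v = 2 * (n - 1) := by
    have h1 := G.sum_degrees_eq_twice_card_edges
    have : ∑ v, d v = ((∑ v, G.degree v : ℕ) : ℤ) := by simp [hd]
    rw [this, h1, hn, ← hcard]; push_cast; ring
  have hmax : ∀ v, d v ≤ d r := by
    intro v
    have := G.degree_le_maxDegree v
    simp only [hd]; rw [← hr]; exact_mod_cast this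
  have hr3 : 3 ≤ d r := by simp only [hd]; rw [← hr]; exact_mod_cast hΔ
  have hnt : Nontrivial V := by
    have : 0 < G.degree r := by simp only [hd] at hr3; omega
    obtain ⟨w, hw⟩ := (G.degree_pos_iff_exists_adj r).1 this
    exact ⟨r, w, hw.ne⟩
  have hmin : ∀ v, 1 ≤ d v := by
    intro v
    have := hc.preconnected.degree_pos_of_nontrivial v
    simp only [hd]; exact_mod_cast this
  have hn2 : 2 ≤ n := by
    have := Fintype.one_lt_card (α := V)
    rw [hn]; exact_mod_cast this
  -- total sigma
  have hTt : sigmaT G = n * S - 4 * (n - 1) ^ 2 := by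
    have h := aux_pairs ((Finset.univ : Finset V).sym2.filter (fun p => ¬ p.IsDiag))
      (fun p hp => (Finset.mem_filter.1 hp).2)
      (Sym2.lift ⟨fun u v => ((G.degree u : ℤ) - (G.degree v : ℤ)) ^ 2,
      fun u v => by simp only []; ring⟩)
    have h2 : ∀ u v : V, (if s(u, v) ∈ (Finset.univ : Finset V).sym2.filter (fun p => ¬ p.IsDiag)
        then (Sym2.lift ⟨fun u v => ((G.degree u : ℤ) - (G.degree v : ℤ)) ^ 2,
      fun u v => by simp only []; ring⟩ : Sym2 V → ℤ) s(u, v) else 0)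
        = d u ^ 2 + d v ^ 2 - 2 * (d u * d v) := by
      intro u v
      by_cases huv : u = v
      · subst huv; simp; ring
      · simp [huv, hd]; ring
    simp_rw [h2] at h
    simp only [Finset.sum_sub_distrib, Finset.sum_add_distrib, Finset.sum_const, Finset.card_univ,
      ← Finset.mul_sum, nsmul_eq_mul, ← Finset.sum_mul] at h
    rw [hsum] at h
    change _ = 2 * sigmaT G at h
    linarith
  -- the minimum function
  let M : Sym2 V → ℤ := Sym2.lift ⟨fun u v => min (d u) (d v), fun u v => min_comm _ _⟩
  have hM := aux_min G hT r d M (by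
    intro p v hv
    induction p using Sym2.ind with
    | _ a b =>
      simp only [Sym2.mem_iff] at hv
      rcases hv with rfl | rfl <;> simp [M])
  let A : Sym2 V → ℤ := Sym2.lift ⟨fun u v => d u + d v, fun u v => add_comm _ _⟩
  have hA : ∑ e ∈ G.edgeFinset, A e = S := by
    have h := aux_pairs G.edgeFinset (fun p hp => G.not_isDiag_of_mem_edgeFinset hp) A
    have h2 : ∀ u v : V, (if s(u, v) ∈ G.edgeFinset then A s(u, v) else 0)
        = (if G.Adj u v then d u else 0) + (if G.Adj v u then d v else 0) := by
      intro u v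
      by_cases huv : G.Adj u v
      · simp [A, huv, huv.symm]
      · have : ¬ G.Adj v u := fun h => huv h.symm
        simp [huv, this]
    have h3 : ∀ u : V, ∑ v, (if G.Adj u v then d u else 0) = d u ^ 2 := by
      intro u
      rw [← Finset.sum_filter, Finset.sum_const, nsmul_eq_mul, ← SimpleGraph.neighborFinset_eq_filter,
        SimpleGraph.card_neighborFinset_eq_degree, pow_two]
    simp_rw [h2, Finset.sum_add_distrib] at h
    rw [Finset.sum_comm (f := fun u v => if G.Adj v u then d v else 0)] at h
    simp_rw [h3] at h
    linarith
  let Q : Sym2 V → ℤ := Sym2.lift ⟨fun u v => ((G.degree u : ℤ) - (G.degree v : ℤ)) ^ 2,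
      fun u v => by simp only []; ring⟩
  have hQ : sigmaE G = ∑ e ∈ G.edgeFinset, Q e := rfl
  have hle : ∀ e, A e - 2 * M e ≤ Q e := by
    intro e
    induction e using Sym2.ind with
    | _ a b =>
      change d a + d b - 2 * min (d a) (d b) ≤ (d a - d b) ^ 2
      rcases le_total (d a) (d b) with h | h
      · rw [min_eq_left h]; nlinarith [Int.le_self_sq (d b - d a)]
      · rw [min_eq_right h]; nlinarith [Int.le_self_sq (d a - d b)]
  have hirr : S - 2 * (2 * (n - 1) - d r) ≤ ∑ e ∈ G.edgeFinset, (A e - 2 * M e) := by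
    rw [Finset.sum_sub_distrib, ← Finset.mul_sum, hA, ← hsum]; linarith
  have hσ : ∑ e ∈ G.edgeFinset, (A e - 2 * M e) ≤ sigmaE G := by
    rw [hQ]; exact Finset.sum_le_sum fun e _ => hle e
  have hW : ∑ v, (d v - 1) * (d r - d v) = (d r + 1) * (2 * (n - 1)) - S - n * d r := by
    have : ∀ v, (d v - 1) * (d r - d v) = (d r + 1) * d v - d v ^ 2 - d r := fun v => by ring
    simp_rw [this, Finset.sum_sub_distrib, ← Finset.mul_sum, hsum]
    simp [hS, hn]
  have hW0 : ∀ v, 0 ≤ (d v - 1) * (d r - d v) := fun v =>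
    mul_nonneg (by linarith [hmin v]) (by linarith [hmax v])
  have hW1 : 0 ≤ ∑ v, (d v - 1) * (d r - d v) := Finset.sum_nonneg fun v _ => hW0 v
  have hn3 : 0 < n - 2 := by
    have h1 : G.degree r < Fintype.card V := G.degree_lt_card_verts r
    have h2 : d r < n := by simp only [hd, hn]; exact_mod_cast h1
    linarith
  rw [hTt]
  by_contra hcon
  push Not at hcon
  have hkey : (n - 2) * (S - 2 * (2 * (n - 1) - d r)) ≤ (n - 2) * sigmaE G :=
    mul_le_mul_of_nonneg_left (hirr.trans hσ) hn3.le
  have hWz : ∑ v, (d v - 1) * (d r - d v) = 0 := by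
    apply le_antisymm _ hW1
    rw [hW]; nlinarith
  have hσz : sigmaE G ≤ S - 2 * (2 * (n - 1) - d r) := by
    rw [hW] at hWz
    by_contra hlt
    push Not at hlt
    have := mul_lt_mul_of_pos_left hlt hn3
    nlinarith
  have hall : ∀ v, d v = 1 ∨ d v = d r := by
    intro v
    have := (Finset.sum_eq_zero_iff_of_nonneg (fun v _ => hW0 v)).1 hWz v (Finset.mem_univ v)
    rcases mul_eq_zero.1 this with h | h
    · left; linarith
    · right; linarith
  have hedge : ∀ e ∈ G.edgeFinset, A e - 2 * M e = Q e := by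
    refine (Finset.sum_eq_sum_iff_of_le fun e _ => hle e).1 ?_
    rw [← hQ]; linarith
  have hadj : ∀ u v, G.Adj u v → d u = d v := by
    intro u v huv
    have h := hedge s(u, v) (by simpa using huv)
    change d u + d v - 2 * min (d u) (d v) = (d u - d v) ^ 2 at h
    have hp : 0 < (d r - 1) * (d r - 2) := mul_pos (by linarith) (by linarith)
    rcases hall u with h1 | h1 <;> rcases hall v with h2 | h2
    · rw [h1, h2]
    · rw [h1, h2, min_eq_left (by linarith)] at h; linarith
    · rw [h1, h2, min_eq_right (by linarith)] at h; linarith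
    · rw [h1, h2]
  have hconst : ∀ v, d v = d r := by
    intro v
    have hw : ∀ a b : V, G.Walk a b → d a = d b := by
      intro a b p
      induction p with
      | nil => rfl
      | cons h q ih => exact (hadj _ _ h).trans ih
    obtain ⟨p⟩ := hc.preconnected v r
    exact hw v r p
  have : ∑ v, d v = n * d r := by
    simp_rw [hconst]; simp [hn]
  rw [hsum] at this
  have h5 : n * 3 ≤ n * d r := mul_le_mul_of_nonneg_left hr3 (by linarith)
  linarith
end

section
/- For every connected finite simple graph G of order n with maximum degree Δ and minimum degree δ, σ(G) ≥ (Δ − δ)² / √(6n). -/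
open Finset
open scoped Classical

lemma aux_tele (L : ℕ) (x : ℕ → ℝ) (hx : ∀ i, i ≤ L → 0 ≤ x i) (lam A : ℝ) (hlam : 0 ≤ lam)
    (hA : ∑ i ∈ range (L+1), x i ≤ A) (F : ℝ → ℝ)
    (hF : ∀ i, i < L → F (x i) - F (x (i+1)) ≤
      (x i - x (i+1))^2 + lam * ((x i + x (i+1))/2)) :
    F (x 0) - F (x L) ≤ ∑ i ∈ range L, (x i - x (i+1))^2 + lam * A := by
  have h1 : ∑ i ∈ range L, (F (x i) - F (x (i+1))) ≤
      ∑ i ∈ range L, ((x i - x (i+1))^2 + lam * ((x i + x (i+1))/2)) :=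
    Finset.sum_le_sum (fun i hi => hF i (Finset.mem_range.1 hi))
  rw [Finset.sum_range_sub' (fun i => F (x i)), Finset.sum_add_distrib, ← Finset.mul_sum,
    ← Finset.sum_div, Finset.sum_add_distrib] at h1
  have h2 := Finset.sum_range_succ x L
  have h3 := Finset.sum_range_succ' x L
  have h4 := hx 0 (by omega)
  have h5 := hx L le_rfl
  have h6 : (∑ i ∈ range L, x i + ∑ i ∈ range L, x (i+1))/2 ≤ A := by linarith
  have := mul_le_mul_of_nonneg_left h6 hlam
  linarith

lemma aux_step (r : ℝ) (hr : 0 < r) (a b : ℤ) (hb : 0 ≤ b) (ha : 0 ≤ a)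
    (har : (a:ℝ) ≤ 2 * r) (F : ℝ → ℝ)
    (hF : F = fun y => if y ≤ r then y + y^2/r else 2*y + y^2/(2*r) - r/2) :
    F a - F b ≤ ((a:ℝ) - b)^2 + (2/r) * (((a:ℝ)+b)/2) := by
  have hb' : (0:ℝ) ≤ b := by exact_mod_cast hb
  have ha' : (0:ℝ) ≤ a := by exact_mod_cast ha
  have q1 : ∀ y : ℝ, F y ≤ y + y^2/r := by
    intro y
    rw [hF]; simp only
    split_ifs
    · exact le_rfl
    · have : y + y^2/r - (2*y + y^2/(2*r) - r/2) = (y-r)^2/(2*r) := by field_simp; ring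
      have : 0 ≤ (y-r)^2/(2*r) := by positivity
      linarith
  have q2 : ∀ y : ℝ, 2*y + y^2/(2*r) - r/2 ≤ F y := by
    intro y
    rw [hF]; simp only
    split_ifs
    · have : y + y^2/r - (2*y + y^2/(2*r) - r/2) = (y-r)^2/(2*r) := by field_simp; ring
      have : 0 ≤ (y-r)^2/(2*r) := by positivity
      linarith
    · exact le_rfl
  have e1 : ∀ y : ℝ, y ≤ r → F y = y + y^2/r := fun y hy => by rw [hF]; simp [hy]
  have e2 : ∀ y : ℝ, r < y → F y = 2*y + y^2/(2*r) - r/2 := fun y hy => by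
    rw [hF]; simp [not_le.2 hy]
  rcases le_or_gt a b with hab | hab
  · have hab' : (a:ℝ) ≤ b := by exact_mod_cast hab
    have hmono : F a ≤ F b := by
      rcases le_or_gt (b:ℝ) r with h | h
      · rw [e1 b h, e1 a (by linarith)]
        have : (a:ℝ)^2/r ≤ (b:ℝ)^2/r := by gcongr
        linarith
      · rcases le_or_gt (a:ℝ) r with h' | h'
        · rw [e1 a h', e2 b h]
          have : (a:ℝ)^2/r ≤ a := by rw [div_le_iff₀ hr]; nlinarith
          have : r/2 ≤ (b:ℝ)^2/(2*r) := by rw [le_div_iff₀ (by positivity)]; nlinarith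
          linarith
        · rw [e2 a h', e2 b h]
          have : (a:ℝ)^2/(2*r) ≤ (b:ℝ)^2/(2*r) := by gcongr
          linarith
    have : 0 ≤ ((a:ℝ) - b)^2 + (2/r) * (((a:ℝ)+b)/2) := by positivity
    linarith
  · obtain ⟨s, hs⟩ : ∃ s : ℤ, s = a - b := ⟨_, rfl⟩
    have hs1 : 1 ≤ s := by omega
    have hsR : (s:ℝ) = a - b := by rw [hs]; push_cast; ring
    obtain ⟨m, hm⟩ : ∃ m : ℝ, m = ((a:ℝ)+b)/(2*r) := ⟨_, rfl⟩
    have hmr : m * (2 * r) = a + b := by rw [hm]; field_simp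
    have hab' : (b:ℝ) < a := by exact_mod_cast hab
    have hm2 : m ≤ 2 := by
      rw [hm, div_le_iff₀ (by positivity)]; linarith
    have hR : ((a:ℝ) - b)^2 + (2/r) * (((a:ℝ)+b)/2) = (s:ℝ)^2 + 2*m := by
      rw [hsR, hm]; field_simp
    rw [hR]
    rcases le_or_gt m 1 with h | h
    · have hbr : (b:ℝ) ≤ r := by nlinarith
      have : F a - F b ≤ s * (1 + 2*m) := by
        rw [e1 b hbr]
        have h1 := q1 a
        have : (a:ℝ) + a^2/r - (b + b^2/r) = s * (1+2*m) := by
          rw [hsR, hm]; field_simp; ring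
        linarith
      rcases eq_or_lt_of_le hs1 with h1 | h1
      · subst_vars; rw [← h1] at this ⊢; norm_num at this ⊢; linarith
      · have : (2:ℝ) ≤ s := by exact_mod_cast h1
        nlinarith
    · have har' : r < a := by nlinarith
      have : F a - F b ≤ s * (2 + m) := by
        rw [e2 a har']
        have h1 := q2 b
        have : 2*(a:ℝ) + a^2/(2*r) - r/2 - (2*b + b^2/(2*r) - r/2) = s * (2+m) := by
          rw [hsR, hm]; field_simp; ring
        linarith
      rcases eq_or_lt_of_le hs1 with h1 | h1
      · rw [← h1] at this ⊢; norm_num at this ⊢; linarith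
      · have : (2:ℝ) ≤ s := by exact_mod_cast h1
        nlinarith

lemma aux_num (L : ℕ) (x : ℕ → ℤ) (D : ℤ) (r : ℝ) (hr : 0 < r)
    (hx : ∀ i, i ≤ L → 0 ≤ x i) (hxD : ∀ i, i ≤ L → x i ≤ D) (h0 : x 0 = D) (hL : x L = 0)
    (hA : ∑ i ∈ range (L+1), (x i : ℝ) ≤ r^2/2) :
    (D:ℝ)^2 / r ≤ ∑ i ∈ range L, ((x i : ℝ) - x (i+1))^2 := by
  have hx' : ∀ i, i ≤ L → (0:ℝ) ≤ x i := fun i hi => by exact_mod_cast hx i hi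
  have hxD' : ∀ i, i ≤ L → (x i:ℝ) ≤ D := fun i hi => by exact_mod_cast hxD i hi
  have hD0 : (0:ℝ) ≤ D := by have := hx' 0 (by omega); rwa [h0] at this
  rw [div_le_iff₀ hr]
  rcases le_or_gt (D:ℝ) r with h | h
  · have := aux_tele L (fun i => (x i:ℝ)) hx' 0 _ le_rfl hA (fun y => y) (by
      intro i hi
      simp only [zero_mul, add_zero]
      have : x i - x (i+1) ≤ (x i - x (i+1))^2 := Int.le_self_sq _
      exact_mod_cast this)
    simp only [h0, hL] at this
    push_cast at this
    nlinarith
  rcases le_or_gt (D:ℝ) (2*r) with h2 | h2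
  · have := aux_tele L (fun i => (x i:ℝ)) hx' (2/r) _ (by positivity) hA
      (fun y => if y ≤ r then y + y^2/r else 2*y + y^2/(2*r) - r/2) (by
      intro i hi
      exact aux_step r hr _ _ (hx _ (by omega)) (hx _ (by omega))
        ((hxD' i (by omega)).trans h2) _ rfl)
    simp only [h0, hL, not_le.2 h, if_false] at this
    have e : 2 / r * (r^2/2) = r := by field_simp
    rw [e] at this
    simp [hr.le] at this
    have h3 : (D:ℝ)^2/(2*r) * (2 * r) = D^2 := by field_simp
    nlinarith
  · have hDp : (0:ℝ) < D := by linarith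
    obtain ⟨al, hal⟩ : ∃ al : ℝ, al = 2 * D / r^2 := ⟨_, rfl⟩
    have hal0 : 0 ≤ al := by rw [hal]; positivity
    have := aux_tele L (fun i => (x i:ℝ)) hx' (al^2*D/4) _ (by positivity) hA
      (fun y => al * y^2/2) (by
      intro i hi
      have ha := hx' i (by omega)
      have hb := hx' (i+1) (by omega)
      have ha' := hxD' i (by omega)
      have hb' := hxD' (i+1) (by omega)
      generalize (x i : ℝ) = a at *
      generalize (x (i+1) : ℝ) = b at *
      have h1 : 0 ≤ ((a-b) - al * ((a+b)/2)/2)^2 := sq_nonneg _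
      have h2 : ((a+b)/2)*((a+b)/2) ≤ D * ((a+b)/2) :=
        mul_le_mul_of_nonneg_right (by linarith) (by linarith)
      have h3 := mul_le_mul_of_nonneg_left h2 (sq_nonneg al)
      nlinarith)
    simp only [h0, hL] at this
    have e : al * (D:ℝ)^2/2 - al * ((0:ℤ):ℝ)^2/2 - al^2*D/4*(r^2/2) = D^3/(2*r^2) := by
      rw [hal]; push_cast; field_simp; ring
    have h4 : (D:ℝ)^3/(2*r^2) ≤ ∑ i ∈ range L, ((x i : ℝ) - x (i+1))^2 := by linarith
    refine le_trans ?_ (mul_le_mul_of_nonneg_right h4 hr.le)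
    have : (D:ℝ)^3/(2*r^2) * r = D^2 * (D / (2*r)) := by field_simp
    rw [this]
    have : 1 ≤ (D:ℝ)/(2*r) := by rw [le_div_iff₀ (by positivity)]; linarith
    nlinarith [sq_nonneg (D:ℝ)]

lemma aux_path {V : Type*} (G : SimpleGraph V) (hG : G.Connected) (u v : V) :
    ∃ (L : ℕ) (p : ℕ → V), p 0 = u ∧ p L = v ∧ (∀ i, i < L → G.Adj (p i) (p (i+1))) ∧
      ∀ i, i ≤ L → G.dist u (p i) = i := by
  obtain ⟨w, hw⟩ := hG.exists_walk_length_eq_dist u v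
  refine ⟨w.length, w.getVert, w.getVert_zero, w.getVert_length,
    fun i hi => w.adj_getVert_succ hi, fun i hi => ?_⟩
  have h1 := SimpleGraph.dist_le (w.take i)
  have h2 := SimpleGraph.dist_le (w.drop i)
  have h3 := hG.dist_triangle (u := u) (v := w.getVert i) (w := v)
  rw [SimpleGraph.Walk.take_length] at h1
  rw [SimpleGraph.Walk.drop_length] at h2
  have := min_le_left i w.length
  omega

lemma aux_count {V : Type*} [Fintype V] (G : SimpleGraph V) (hG : G.Connected) (u : V) (L : ℕ)
    (p : ℕ → V) (hp : ∀ i, i ≤ L → G.dist u (p i) = i) :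
    ∑ i ∈ range (L+1), G.degree (p i) ≤ 3 * Fintype.card V := by
  have h1 : ∀ i, G.degree (p i) = ∑ w : V, if G.Adj (p i) w then 1 else 0 := by
    intro i
    rw [← SimpleGraph.card_neighborFinset_eq_degree, SimpleGraph.neighborFinset_eq_filter,
      Finset.card_filter]
  simp_rw [h1]
  rw [Finset.sum_comm]
  have h2 : ∀ w : V, (∑ i ∈ range (L+1), if G.Adj (p i) w then 1 else 0) ≤ 3 := by
    intro w
    rw [← Finset.card_filter]
    have : (range (L+1)).filter (fun i => G.Adj (p i) w) ⊆
        Finset.Icc (G.dist u w - 1) (G.dist u w + 1) := by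
      intro i hi
      rw [Finset.mem_filter, Finset.mem_range] at hi
      obtain ⟨hi, ha⟩ := hi
      have e := hp i (by omega)
      have a1 := hG.dist_triangle (u := u) (v := p i) (w := w)
      have a2 := hG.dist_triangle (u := u) (v := w) (w := p i)
      have a3 := SimpleGraph.dist_eq_one_iff_adj.2 ha
      have a4 := SimpleGraph.dist_eq_one_iff_adj.2 ha.symm
      rw [Finset.mem_Icc]; omega
    refine (Finset.card_le_card this).trans ?_
    rw [Nat.card_Icc]; omega
  refine (Finset.sum_le_sum (fun w _ => h2 w)).trans ?_
  simp [mul_comm]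

lemma aux_energy {V : Type*} [Fintype V] (G : SimpleGraph V) (u : V) (L : ℕ)
    (p : ℕ → V) (hp : ∀ i, i ≤ L → G.dist u (p i) = i)
    (hadj : ∀ i, i < L → G.Adj (p i) (p (i+1))) :
    ∑ i ∈ range L, ((G.degree (p i) : ℤ) - G.degree (p (i+1)))^2 ≤ sigmaE G := by
  have hinj : Set.InjOn (fun i => s(p i, p (i+1))) (range L : Set ℕ) := by
    intro i hi j hj h
    simp only [Finset.coe_range, Set.mem_Iio] at hi hj
    have a1 := hp i (by omega)
    have a2 := hp (i+1) (by omega)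
    have a3 := hp j (by omega)
    have a4 := hp (j+1) (by omega)
    rcases Sym2.eq_iff.1 h with ⟨h1, h2⟩ | ⟨h1, h2⟩
    · rw [h1] at a1; omega
    · rw [h1] at a1; rw [h2] at a2; omega
  unfold sigmaE
  have hsub : (range L).image (fun i => s(p i, p (i+1))) ⊆ G.edgeFinset := by
    intro e he
    obtain ⟨i, hi, rfl⟩ := Finset.mem_image.1 he
    rw [SimpleGraph.mem_edgeFinset, SimpleGraph.mem_edgeSet]
    exact hadj i (Finset.mem_range.1 hi)
  refine le_trans ?_ (Finset.sum_le_sum_of_subset_of_nonneg hsub ?_)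
  · rw [Finset.sum_image hinj]
    simp
  · intro e _ _
    induction e using Sym2.ind with
    | _ a b => simp only [Sym2.lift_mk]; positivity

/-- For every connected finite simple graph `G` of order `n` with maximum degree `Δ` and
minimum degree `δ`, `σ(G) ≥ (Δ - δ)² / √(6n)`. -/
theorem stmt12 {V : Type*} [Fintype V] (G : SimpleGraph V) (hG : G.Connected) :
    (sigmaE G : ℝ)
      ≥ ((G.maxDegree : ℝ) - (G.minDegree : ℝ)) ^ 2
          / Real.sqrt (6 * (Fintype.card V : ℝ)) := by
  have : Nonempty V := hG.nonempty
  obtain ⟨u, hu⟩ := G.exists_maximal_degree_vertex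
  obtain ⟨v, hv⟩ := G.exists_minimal_degree_vertex
  obtain ⟨L, p, hp0, hpL, hadj, hp⟩ := aux_path G hG u v
  have hn : (0:ℝ) < Fintype.card V := by exact_mod_cast Fintype.card_pos
  have hcount := aux_count G hG u L p hp
  have hen := aux_energy G u L p hp hadj
  have := aux_num L (fun i => (G.degree (p i) : ℤ) - G.minDegree)
    ((G.maxDegree : ℤ) - G.minDegree) (Real.sqrt (6 * (Fintype.card V : ℝ)))
    (Real.sqrt_pos.2 (by positivity))
    (fun i _ => by have := G.minDegree_le_degree (p i); omega)
    (fun i _ => by have := G.degree_le_maxDegree (p i); omega)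
    (by subst hp0; simp only [hu]) (by subst hpL; simp only [hv, sub_self])
    (by
      rw [Real.sq_sqrt (by positivity)]
      have h1 : ∑ i ∈ range (L+1), (((G.degree (p i) : ℤ) - G.minDegree : ℤ) : ℝ) ≤
          ∑ i ∈ range (L+1), (G.degree (p i) : ℝ) := by
        apply Finset.sum_le_sum
        intro i _
        push_cast
        have : (0:ℝ) ≤ G.minDegree := by positivity
        linarith
      have h2 : ∑ i ∈ range (L+1), (G.degree (p i) : ℝ) ≤ 3 * Fintype.card V := by
        exact_mod_cast hcount
      linarith)
  push_cast at this
  refine ge_iff_le.2 (this.trans ?_)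
  have hen' : ∑ i ∈ range L, ((G.degree (p i) : ℝ) - G.degree (p (i+1)))^2 ≤ (sigmaE G : ℝ) := by
    exact_mod_cast hen
  refine le_trans (le_of_eq ?_) hen'
  exact Finset.sum_congr rfl (fun i _ => by ring)
end
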